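/- Let A be a symmetric n×n real matrix with ‖A‖ ≤ 1 and nonnegative entries. If A has at most s eigenvalues ≥ τ for some τ ≥ 0, then for any σ ∈ (0,1), A has at most s/σ² eigenvalues ≤ -√(τ(1-σ) + σ). -/

import Mathlib

/-!
Write `A = ∑ₖ αₖ vₖ vₖᵀ` with `v` orthonormal, let `S` be the set of the `t` very negative
eigenvalues, `λ² = τ (1 - σ) + σ`, and let `G = ∑_{k ∈ S} vₖ vₖᵀ`, which is the Gram matrix of some
vectors `uᵢ ∈ ℝ^S`. Then `|⟨A, G⟩| ≥ λ t`. The signs are removed by passing to the Gram matrix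
`X i j = ⟨uᵢ, uⱼ⟩² / (‖uᵢ‖ ‖uⱼ‖)` of the vectors `uᵢ ⊗ uᵢ / ‖uᵢ‖`. It is positive semidefinite, has
trace `t`, and `‖X‖_F² ≤ ‖G‖_F² = t`. As `A` has nonnegative entries, Cauchy–Schwarz gives
`(λ t)² ≤ ⟨A, X⟩ · ∑ A i j ‖uᵢ‖ ‖uⱼ‖ ≤ ⟨A, X⟩ · t`, so `⟨A, X⟩ ≥ λ² t`.

Expanding `⟨A, X⟩ = ∑ₖ αₖ qₖ` with `qₖ = vₖᵀ X vₖ ≥ 0` and `∑ₖ qₖ = t`, the mass `p` of `q` on the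
eigenvalues `≥ τ` satisfies `λ² t ≤ p + τ (t - p)`, whence `p ≥ σ t` if `τ < 1`
(for `τ = 1` the same bound forces `p = t`). On the other hand `p` is the
inner product of `X` with a projection of rank at most `s`, so `p² ≤ s t`. Together, `σ² t ≤ s`.
-/

open Matrix Finset
open scoped Classical

section NegativeEigenvalues

variable {ι : Type*}

/-- Entry `(i, j)` of `∑ k ∈ S, vₖ vₖᵀ`, where `vₖ` is the `k`-th column of `U`; also the inner
product of the `i`-th and `j`-th rows of `U` restricted to the columns in `S`. -/
def rowGram (U : ι → ι → ℝ) (S : Finset ι) (i j : ι) : ℝ := ∑ k ∈ S, U i k * U j k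

/-- Gram matrix of the vectors `uᵢ ⊗ uᵢ / ‖uᵢ‖`, where `rowGram U S` is the Gram matrix of the `uᵢ`.
Rows with `uᵢ = 0` give zero entries, through division by zero. -/
noncomputable def gramSq (U : ι → ι → ℝ) (S : Finset ι) (i j : ι) : ℝ :=
  rowGram U S i j ^ 2 / (√(rowGram U S i i) * √(rowGram U S j j))

lemma gram_self_nonneg (U : ι → ι → ℝ) (S : Finset ι) (i : ι) : 0 ≤ rowGram U S i i :=
  Finset.sum_nonneg fun _ _ => mul_self_nonneg _

lemma gram_sq_le (U : ι → ι → ℝ) (S : Finset ι) (i j : ι) :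
    rowGram U S i j ^ 2 ≤ rowGram U S i i * rowGram U S j j := by
  have h := Finset.sum_mul_sq_le_sq_mul_sq S (U i) (U j)
  simpa only [rowGram, sq] using h

lemma gramSq_self (U : ι → ι → ℝ) (S : Finset ι) (i : ι) :
    gramSq U S i i = rowGram U S i i := by
  rw [gramSq, Real.mul_self_sqrt (gram_self_nonneg U S i), sq, mul_self_div_self]

lemma gramSq_nonneg (U : ι → ι → ℝ) (S : Finset ι) (i j : ι) : 0 ≤ gramSq U S i j := by
  unfold gramSq; positivity

lemma gramSq_mul (U : ι → ι → ℝ) (S : Finset ι) (i j : ι) :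
    gramSq U S i j * (√(rowGram U S i i) * √(rowGram U S j j)) = rowGram U S i j ^ 2 := by
  refine div_mul_cancel_of_imp fun h => ?_
  have h2 := gram_sq_le U S i j
  have h3 : rowGram U S i i * rowGram U S j j = 0 := by
    rw [← Real.mul_self_sqrt (gram_self_nonneg U S i),
      ← Real.mul_self_sqrt (gram_self_nonneg U S j), mul_mul_mul_comm, h, mul_zero]
  exact le_antisymm (h3 ▸ h2) (sq_nonneg _)

lemma gramSq_sq_le (U : ι → ι → ℝ) (S : Finset ι) (i j : ι) :
    gramSq U S i j ^ 2 ≤ rowGram U S i j ^ 2 := by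
  have h0 := gramSq_nonneg U S i j
  have h : gramSq U S i j ≤ √(rowGram U S i i) * √(rowGram U S j j) := by
    refine div_le_of_le_mul₀ (by positivity) (by positivity) ?_
    rw [mul_mul_mul_comm, Real.mul_self_sqrt (gram_self_nonneg U S i),
      Real.mul_self_sqrt (gram_self_nonneg U S j)]
    exact gram_sq_le U S i j
  rw [← gramSq_mul U S i j, sq]
  exact mul_le_mul_of_nonneg_left h h0

variable [Fintype ι]

/-- The entrywise square of a Gram matrix is the Gram matrix of the tensor
squares, here evaluated as a quadratic form at `w`. -/
lemma sum_gram_sq (U : ι → ι → ℝ) (S : Finset ι) (w : ι → ℝ) :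
    ∑ i, ∑ j, w i * w j * rowGram U S i j ^ 2
      = ∑ k ∈ S, ∑ l ∈ S, (∑ i, w i * (U i k * U i l)) ^ 2 := by
  have h1 : ∀ i j, w i * w j * rowGram U S i j ^ 2
      = ∑ k ∈ S, ∑ l ∈ S, (w i * (U i k * U i l)) * (w j * (U j k * U j l)) := by
    intro i j
    rw [rowGram, sq, Finset.sum_mul_sum, Finset.mul_sum]
    refine Finset.sum_congr rfl fun k _ => ?_
    rw [Finset.mul_sum]
    exact Finset.sum_congr rfl fun l _ => by ring
  simp_rw [h1, sq, Finset.sum_mul_sum]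
  calc _ = ∑ i, ∑ k ∈ S, ∑ l ∈ S, ∑ j,
          (w i * (U i k * U i l)) * (w j * (U j k * U j l)) := by
        refine Finset.sum_congr rfl fun i _ => ?_
        rw [Finset.sum_comm]
        exact Finset.sum_congr rfl fun k _ => Finset.sum_comm
    _ = _ := by
        rw [Finset.sum_comm]
        exact Finset.sum_congr rfl fun k _ => Finset.sum_comm

lemma sum_gram_self [DecidableEq ι] {U : ι → ι → ℝ}
    (hcol : ∀ k l, ∑ i, U i k * U i l = if k = l then 1 else 0) (S : Finset ι) :
    ∑ i, rowGram U S i i = S.card := by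
  simp only [rowGram]
  rw [Finset.sum_comm]
  simp [hcol]

lemma sum_gram_sq_eq_card [DecidableEq ι] {U : ι → ι → ℝ}
    (hcol : ∀ k l, ∑ i, U i k * U i l = if k = l then 1 else 0) (S : Finset ι) :
    ∑ i, ∑ j, rowGram U S i j ^ 2 = S.card := by
  have h := sum_gram_sq U S (fun _ => 1)
  simp only [one_mul] at h
  rw [h]
  simp [hcol]

lemma gramSq_psd (U : ι → ι → ℝ) (S : Finset ι) (w : ι → ℝ) :
    0 ≤ ∑ i, ∑ j, w i * w j * gramSq U S i j := by
  have h : ∑ i, ∑ j, w i * w j * gramSq U S i j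
      = ∑ i, ∑ j, (w i / √(rowGram U S i i)) * (w j / √(rowGram U S j j)) * rowGram U S i j ^ 2 := by
    refine Finset.sum_congr rfl fun i _ => Finset.sum_congr rfl fun j _ => ?_
    rw [gramSq]; ring
  rw [h, sum_gram_sq]
  exact Finset.sum_nonneg fun _ _ => Finset.sum_nonneg fun _ _ => sq_nonneg _

/-- `⟨∑ₖ αₖ vₖ vₖᵀ, X⟩ = ∑ₖ αₖ vₖᵀ X vₖ`. -/
lemma sum_spectral_mul (U X : ι → ι → ℝ) (α : ι → ℝ) (T : Finset ι) :
    ∑ i, ∑ j, (∑ k ∈ T, α k * (U i k * U j k)) * X i j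
      = ∑ k ∈ T, α k * ∑ i, ∑ j, U i k * U j k * X i j := by
  simp_rw [Finset.sum_mul, Finset.mul_sum]
  calc _ = ∑ i, ∑ k ∈ T, ∑ j, α k * (U i k * U j k) * X i j :=
        Finset.sum_congr rfl fun i _ => Finset.sum_comm
    _ = _ := by
        rw [Finset.sum_comm]
        simp_rw [mul_assoc]

/-- The quadratic form of `∑ₖ αₖ vₖ vₖᵀ` is at most the squared norm when all `αₖ ≤ 1`. -/
lemma quadForm_le [DecidableEq ι] {U A : ι → ι → ℝ} {α : ι → ℝ}
    (hrow : ∀ i j, ∑ k, U i k * U j k = if i = j then 1 else 0)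
    (hA : ∀ i j, A i j = ∑ k, α k * (U i k * U j k)) (hα : ∀ k, α k ≤ 1) (w : ι → ℝ) :
    ∑ i, ∑ j, A i j * (w i * w j) ≤ ∑ i, w i ^ 2 := by
  have h1 : ∑ i, ∑ j, A i j * (w i * w j)
      = ∑ k, α k * ∑ i, ∑ j, U i k * U j k * (w i * w j) := by
    simp_rw [hA]
    exact sum_spectral_mul U (fun i j => w i * w j) α univ
  have h2 : ∑ i, w i ^ 2 = ∑ k, 1 * ∑ i, ∑ j, U i k * U j k * (w i * w j) := by
    rw [← sum_spectral_mul U (fun i j => w i * w j) (fun _ => 1) univ]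
    simp [hrow, sq]
  rw [h1, h2]
  refine Finset.sum_le_sum fun k _ => mul_le_mul_of_nonneg_right (hα k) ?_
  have : ∑ i, ∑ j, U i k * U j k * (w i * w j) = (∑ i, U i k * w i) ^ 2 := by
    rw [sq, Finset.sum_mul_sum]
    exact Finset.sum_congr rfl fun i _ => Finset.sum_congr rfl fun j _ => by ring
  rw [this]
  positivity

/-- Cauchy–Schwarz lower bound on `⟨A, X⟩` for `X = gramSq U S`; this is where the nonnegativity of
the entries of `A` enters. -/
lemma sq_mul_card_le [DecidableEq ι] {U A : ι → ι → ℝ} {α : ι → ℝ}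
    (hcol : ∀ k l, ∑ i, U i k * U i l = if k = l then 1 else 0)
    (hrow : ∀ i j, ∑ k, U i k * U j k = if i = j then 1 else 0)
    (hA : ∀ i j, A i j = ∑ k, α k * (U i k * U j k)) (hα : ∀ k, α k ≤ 1)
    (hpos : ∀ i j, 0 ≤ A i j) {c : ℝ} (hc : 0 ≤ c) (S : Finset ι) (hS : ∀ k ∈ S, α k ≤ -c) :
    c ^ 2 * S.card ≤ ∑ i, ∑ j, A i j * gramSq U S i j := by
  have hX0 : 0 ≤ ∑ i, ∑ j, A i j * gramSq U S i j :=
    Finset.sum_nonneg fun i _ => Finset.sum_nonneg fun j _ =>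
      mul_nonneg (hpos i j) (gramSq_nonneg U S i j)
  have htr : ∑ i, ∑ j, A i j * rowGram U S i j = ∑ k ∈ S, α k := by
    have h := sum_spectral_mul U A (fun _ => 1) S
    simp only [one_mul] at h
    have h' : ∑ i, ∑ j, A i j * rowGram U S i j
        = ∑ k ∈ S, ∑ i, ∑ j, U i k * U j k * A i j := by
      rw [← h]
      exact Finset.sum_congr rfl fun i _ => Finset.sum_congr rfl fun j _ => mul_comm _ _
    rw [h']
    refine Finset.sum_congr rfl fun k _ => ?_
    have hk := sum_spectral_mul U (fun i j => U i k * U j k) α univ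
    have e : ∀ l, ∑ i, ∑ j, U i l * U j l * (U i k * U j k) = if l = k then 1 else 0 := by
      intro l
      have : ∑ i, ∑ j, U i l * U j l * (U i k * U j k) = (∑ i, U i l * U i k) ^ 2 := by
        rw [sq, Finset.sum_mul_sum]
        exact Finset.sum_congr rfl fun i _ => Finset.sum_congr rfl fun j _ => by ring
      rw [this, hcol]
      split_ifs <;> simp
    simp_rw [← hA, e] at hk
    simp only [mul_ite, mul_one, mul_zero, Finset.sum_ite_eq', Finset.mem_univ, if_true] at hk
    rw [← hk]
    exact Finset.sum_congr rfl fun i _ => Finset.sum_congr rfl fun j _ => mul_comm _ _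
  have hlow : c * S.card ≤ ∑ i, ∑ j, A i j * |rowGram U S i j| := by
    have h1 : ∑ k ∈ S, α k ≤ ∑ k ∈ S, -c := Finset.sum_le_sum hS
    have h2 : ∑ i, ∑ j, -(A i j * |rowGram U S i j|) ≤ ∑ i, ∑ j, A i j * rowGram U S i j :=
      Finset.sum_le_sum fun i _ => Finset.sum_le_sum fun j _ => by
        rw [← mul_neg]
        exact mul_le_mul_of_nonneg_left (neg_abs_le _) (hpos i j)
    simp only [Finset.sum_neg_distrib, Finset.sum_const, nsmul_eq_mul] at h1 h2
    linarith
  have hcs : (∑ i, ∑ j, A i j * |rowGram U S i j|) ^ 2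
      ≤ (∑ i, ∑ j, A i j * gramSq U S i j)
        * ∑ i, ∑ j, A i j * (√(rowGram U S i i) * √(rowGram U S j j)) := by
    simp only [← Finset.sum_product']
    refine Finset.sum_sq_le_sum_mul_sum_of_sq_le_mul _ (fun p _ => ?_) (fun p _ => ?_)
      (fun p _ => le_of_eq ?_)
    · exact mul_nonneg (hpos _ _) (gramSq_nonneg _ _ _ _)
    · exact mul_nonneg (hpos _ _) (by positivity)
    · rw [mul_pow, sq_abs, ← gramSq_mul]; ring
  have hd : ∑ i, ∑ j, A i j * (√(rowGram U S i i) * √(rowGram U S j j)) ≤ S.card := by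
    refine (quadForm_le hrow hA hα fun i => √(rowGram U S i i)).trans_eq ?_
    rw [← sum_gram_self hcol S]
    exact Finset.sum_congr rfl fun i _ => Real.sq_sqrt (gram_self_nonneg U S i)
  rcases Nat.eq_zero_or_pos S.card with h0 | h0
  · simpa [h0] using hX0
  · have ht : (0 : ℝ) < S.card := by exact_mod_cast h0
    have h3 : (c * S.card) ^ 2 ≤ (∑ i, ∑ j, A i j * gramSq U S i j) * S.card :=
      (pow_le_pow_left₀ (by positivity) hlow 2).trans
        (hcs.trans (mul_le_mul_of_nonneg_left hd hX0))
    refine le_of_mul_le_mul_right ?_ ht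
    calc _ = (c * S.card) ^ 2 := by ring
      _ ≤ _ := h3

/-- `X = gramSq U S` has inner product at most `√(#T #S)` in absolute value with the projection onto the span of the
columns of `U` in `T`. -/
lemma sq_mass_le [DecidableEq ι] {U : ι → ι → ℝ}
    (hcol : ∀ k l, ∑ i, U i k * U i l = if k = l then 1 else 0) (S T : Finset ι) :
    (∑ k ∈ T, ∑ i, ∑ j, U i k * U j k * gramSq U S i j) ^ 2 ≤ T.card * S.card := by
  have h := sum_spectral_mul U (gramSq U S) (fun _ => 1) T
  simp only [one_mul] at h
  have hcs : (∑ i, ∑ j, rowGram U T i j * gramSq U S i j) ^ 2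
      ≤ (∑ i, ∑ j, rowGram U T i j ^ 2) * ∑ i, ∑ j, gramSq U S i j ^ 2 := by
    simp only [← Finset.sum_product']
    exact Finset.sum_mul_sq_le_sq_mul_sq _ _ _
  rw [← h]
  refine hcs.trans ?_
  rw [sum_gram_sq_eq_card hcol T]
  refine mul_le_mul_of_nonneg_left ?_ (Nat.cast_nonneg _)
  rw [← sum_gram_sq_eq_card hcol S]
  exact Finset.sum_le_sum fun i _ => Finset.sum_le_sum fun j _ => gramSq_sq_le U S i j

/-- A nonnegative weight `q` whose `α`-average is at least `τ (1 - σ) + σ` puts at least a `σ`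
fraction of its mass on `{α ≥ τ}`, when `α ≤ 1`. -/
lemma mass_ge {α q : ι → ℝ} {t τ σ : ℝ} (hα : ∀ k, α k ≤ 1) (hq : ∀ k, 0 ≤ q k)
    (hsum : ∑ k, q k = t) (hτ1 : τ ≤ 1) (hσ1 : σ < 1)
    (h : (τ * (1 - σ) + σ) * t ≤ ∑ k, α k * q k) :
    σ * t ≤ ∑ k ∈ univ.filter (fun k => τ ≤ α k), q k := by
  set p := ∑ k ∈ univ.filter (fun k => τ ≤ α k), q k with hp
  have ht : 0 ≤ t := hsum ▸ Finset.sum_nonneg fun k _ => hq k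
  rcases hτ1.lt_or_eq with hlt | rfl
  · have h1 : ∑ k, α k * q k ≤ ∑ k, (τ * q k + (1 - τ) * if τ ≤ α k then q k else 0) := by
      refine Finset.sum_le_sum fun k _ => ?_
      split_ifs with hk
      · nlinarith [mul_le_mul_of_nonneg_right (hα k) (hq k)]
      · nlinarith [mul_le_mul_of_nonneg_right (not_le.mp hk).le (hq k)]
    rw [Finset.sum_add_distrib, ← Finset.mul_sum, ← Finset.mul_sum, hsum, ← Finset.sum_filter,
      ← hp] at h1
    refine le_of_mul_le_mul_left ?_ (sub_pos.mpr hlt)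
    linarith
  · -- For `τ = 1` the average of `α` is `1`, so `q` is supported on `{α = 1}`.
    have h0 : ∑ k, (1 - α k) * q k = 0 := by
      refine le_antisymm ?_ (Finset.sum_nonneg fun k _ =>
        mul_nonneg (sub_nonneg.mpr (hα k)) (hq k))
      simp_rw [sub_mul, one_mul]
      rw [Finset.sum_sub_distrib, hsum]
      linarith
    rw [Finset.sum_eq_zero_iff_of_nonneg
      (fun k _ => mul_nonneg (sub_nonneg.mpr (hα k)) (hq k))] at h0
    have hpt : p = t := by
      rw [hp, ← hsum]
      refine Finset.sum_filter_of_ne fun k _ hk => ?_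
      have := (mul_eq_zero.mp (h0 k (mem_univ k))).resolve_right hk
      linarith
    rw [hpt]
    nlinarith

end NegativeEigenvalues

theorem stmt1 {n : ℕ} (A : Matrix (Fin n) (Fin n) ℝ) (hA : A.IsHermitian)
    (hpos : ∀ i j, 0 ≤ A i j)
    (hnorm : ∀ i, |hA.eigenvalues i| ≤ 1)
    (τ : ℝ) (hτ : 0 ≤ τ) (s : ℕ)
    (htop : (Finset.univ.filter fun i => τ ≤ hA.eigenvalues i).card ≤ s)
    (σ : ℝ) (hσ0 : 0 < σ) (hσ1 : σ < 1) :
    ((Finset.univ.filter fun i =>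
        hA.eigenvalues i ≤ -Real.sqrt (τ * (1 - σ) + σ)).card : ℝ) ≤ s / σ ^ 2 := by
  set S := Finset.univ.filter fun i => hA.eigenvalues i ≤ -Real.sqrt (τ * (1 - σ) + σ) with hSdef
  have hc2 : 0 ≤ τ * (1 - σ) + σ := by nlinarith
  rcases S.eq_empty_or_nonempty with hS | ⟨k₀, hk₀⟩
  · rw [hS]; simp; positivity
  have hτ1 : τ ≤ 1 := by
    have h1 := (Finset.mem_filter.mp hk₀).2
    have h2 := (abs_le.mp (hnorm k₀)).1
    have h3 : τ * (1 - σ) + σ ≤ 1 :=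
      Real.sqrt_le_one.mp (by linarith)
    nlinarith
  have ht : (0 : ℝ) < S.card := by exact_mod_cast Finset.card_pos.mpr ⟨k₀, hk₀⟩
  let U : Fin n → Fin n → ℝ := fun i k => (hA.eigenvectorUnitary : Matrix (Fin n) (Fin n) ℝ) i k
  have hcol : ∀ k l, ∑ i, U i k * U i l = if k = l then 1 else 0 := by
    intro k l
    have h := congrFun (congrFun (Unitary.coe_star_mul_self hA.eigenvectorUnitary) k) l
    simpa [Matrix.mul_apply, Matrix.one_apply, Matrix.star_apply, U] using h
  have hrow : ∀ i j, ∑ k, U i k * U j k = if i = j then 1 else 0 := by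
    intro i j
    have h := congrFun (congrFun (Unitary.coe_mul_star_self hA.eigenvectorUnitary) i) j
    simpa [Matrix.mul_apply, Matrix.one_apply, Matrix.star_apply, U] using h
  have hspec : ∀ i j, A i j = ∑ k, hA.eigenvalues k * (U i k * U j k) := by
    intro i j
    have h := congrFun (congrFun hA.spectral_theorem i) j
    rw [h]
    simp [Unitary.conjStarAlgAut_apply, Matrix.mul_apply, Matrix.diagonal_apply,
      Matrix.star_apply, U]
    exact Finset.sum_congr rfl fun k _ => by ring
  have hα : ∀ k, hA.eigenvalues k ≤ 1 := fun k => (abs_le.mp (hnorm k)).2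
  have hlow := sq_mul_card_le hcol hrow hspec hα hpos (Real.sqrt_nonneg (τ * (1 - σ) + σ)) S
    fun k hk => (Finset.mem_filter.mp hk).2
  rw [Real.sq_sqrt hc2] at hlow
  simp_rw [hspec] at hlow
  rw [sum_spectral_mul] at hlow
  have hqsum : ∑ k, ∑ i, ∑ j, U i k * U j k * gramSq U S i j = S.card := by
    have h := sum_spectral_mul U (gramSq U S) (fun _ => 1) univ
    simp only [one_mul] at h
    rw [← h, ← sum_gram_self hcol S]
    simp [hrow, gramSq_self]
  have hmass := mass_ge hα (fun k => gramSq_psd U S fun i => U i k) hqsum hτ1 hσ1 hlow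
  have hup := sq_mass_le hcol S (univ.filter fun k => τ ≤ hA.eigenvalues k)
  have hs : ((univ.filter fun k => τ ≤ hA.eigenvalues k).card : ℝ) ≤ s := by exact_mod_cast htop
  have h1 : (σ * S.card) ^ 2 ≤ s * S.card :=
    (pow_le_pow_left₀ (by positivity) hmass 2).trans
      (hup.trans (mul_le_mul_of_nonneg_right hs ht.le))
  rw [le_div_iff₀ (by positivity)]
  refine le_of_mul_le_mul_right ?_ ht
  linarith [show (σ * S.card) ^ 2 = S.card * σ ^ 2 * S.card by ring]
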